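/- Let w_a, w_{a*}, w_b, w_{b*} be words with w_b ≠ w_{a*} and w_{b*} ≠ w_a, and set W := {w_b, w_{a*}} and W_* := {w_{b*}, w_a}. If each of the four words has an embedding with respect to C (Cᵀ.mulVec w⃗_i = PMI_i), then w⃗_{b*} = w⃗_{a*} − w⃗_a + w⃗_b + C†.mulVec( ρ^{W,W_*} + σ^W − σ^{W_*} − (τ^W − τ^{W_*})·𝟙 ). (Paper's Corollary 9: the analogy identity with the canonical transformation parameters W⁺ = {w_{a*}}, W⁻ = {w_a}.) -/

import Mathlib

open MeasureTheory Real Finset Matrix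

namespace AnalogiesExplained

variable {Ω : Type*}

/-- Conditional probability `p(B ∣ A) = μ(A ∩ B) / μ(A)` (as a real number). -/
noncomputable def condP [MeasurableSpace Ω] (μ : Measure Ω) (A B : Set Ω) : ℝ :=
  (μ (A ∩ B)).toReal / (μ A).toReal

/-- Pointwise mutual information `PMI(A, B) = log (μ(A ∩ B) / (μ(A)·μ(B)))`. -/
noncomputable def PMI [MeasurableSpace Ω] (μ : Measure Ω) (A B : Set Ω) : ℝ :=
  Real.log ((μ (A ∩ B)).toReal / ((μ A).toReal * (μ B).toReal))

/-- The joint event of a finite word set: `A_W = ⋂ i ∈ W, A i`. -/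
def jointEvent {ι : Type*} (A : ι → Set Ω) (W : Finset ι) : Set Ω :=
  ⋂ i ∈ W, A i

/-- Paraphrase error `ρ^{W,W*}_j = log (p(B_j ∣ A_{W*}) / p(B_j ∣ A_W))`. -/
noncomputable def rho [MeasurableSpace Ω] (μ : Measure Ω) (AW AWstar B : Set Ω) : ℝ :=
  Real.log (condP μ AWstar B / condP μ AW B)

/-- Conditional-dependence error `σ^W_j = log (p(A_W ∣ B_j) / ∏_{i ∈ W} p(A_i ∣ B_j))`. -/
noncomputable def sigma [MeasurableSpace Ω] {ι : Type*} (μ : Measure Ω) (A : ι → Set Ω)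
    (W : Finset ι) (B : Set Ω) : ℝ :=
  Real.log (condP μ B (jointEvent A W) / ∏ i ∈ W, condP μ B (A i))

/-- Marginal-dependence error `τ^W = log (μ(A_W) / ∏_{i ∈ W} μ(A_i))`. -/
noncomputable def tau [MeasurableSpace Ω] {ι : Type*} (μ : Measure Ω) (A : ι → Set Ω)
    (W : Finset ι) : ℝ :=
  Real.log ((μ (jointEvent A W)).toReal / ∏ i ∈ W, (μ (A i)).toReal)

/-
`ρ` is a difference of the PMIs of the two joint events, and `σ^W - τ^W` is the failure of PMI to be
additive over `W`. So the error vector is the difference of the summed PMI vectors of `W_*` and `W`,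
that is, the image under `Cᵀ` of the difference of the summed embeddings, which `C†` recovers.
-/

section Probability

variable [MeasurableSpace Ω] {μ : Measure Ω} {S T B : Set Ω}

theorem PMI_comm (μ : Measure Ω) (S B : Set Ω) : PMI μ S B = PMI μ B S := by
  rw [PMI, PMI, Set.inter_comm, mul_comm]

variable [IsFiniteMeasure μ]

theorem measureReal_pos_of_inter_left (h : 0 < μ.real (S ∩ B)) : 0 < μ.real S :=
  h.trans_le (measureReal_mono Set.inter_subset_left)

theorem measureReal_pos_of_inter_right (h : 0 < μ.real (S ∩ B)) : 0 < μ.real B :=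
  h.trans_le (measureReal_mono Set.inter_subset_right)

theorem condP_pos (h : 0 < μ.real (S ∩ B)) : 0 < condP μ S B :=
  div_pos h (measureReal_pos_of_inter_left h)

theorem PMI_eq_log_condP_sub_log (h : 0 < μ.real (S ∩ B)) :
    PMI μ S B = Real.log (condP μ S B) - Real.log (μ.real B) := by
  rw [← Real.log_div (condP_pos h).ne' (measureReal_pos_of_inter_right h).ne', PMI, condP,
    div_div, measureReal_def]

theorem rho_eq_PMI_sub_PMI (hS : 0 < μ.real (S ∩ B)) (hT : 0 < μ.real (T ∩ B)) :
    rho μ S T B = PMI μ T B - PMI μ S B := by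
  rw [rho, Real.log_div (condP_pos hT).ne' (condP_pos hS).ne', PMI_eq_log_condP_sub_log hT,
    PMI_eq_log_condP_sub_log hS, sub_sub_sub_cancel_right]

end Probability

section JointEvent

variable [MeasurableSpace Ω] {μ : Measure Ω} [IsFiniteMeasure μ] {ι : Type*} {A : ι → Set Ω}
  {W Wstar : Finset ι} {B : Set Ω}

theorem measureReal_inter_pos_of_jointEvent (h : 0 < μ.real (B ∩ jointEvent A W)) {i : ι}
    (hi : i ∈ W) : 0 < μ.real (B ∩ A i) :=
  h.trans_le (measureReal_mono (Set.inter_subset_inter_right B (Set.biInter_subset_of_mem hi)))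

theorem sigma_eq_log_sub_sum (h : 0 < μ.real (B ∩ jointEvent A W)) :
    sigma μ A W B
      = Real.log (condP μ B (jointEvent A W)) - ∑ i ∈ W, Real.log (condP μ B (A i)) := by
  have hcond : ∀ i ∈ W, condP μ B (A i) ≠ 0 := fun i hi =>
    (condP_pos (measureReal_inter_pos_of_jointEvent h hi)).ne'
  rw [sigma, Real.log_div (condP_pos h).ne' (prod_ne_zero_iff.2 hcond), Real.log_prod hcond]

theorem tau_eq_log_sub_sum (h : 0 < μ.real (jointEvent A W)) :
    tau μ A W = Real.log (μ.real (jointEvent A W)) - ∑ i ∈ W, Real.log (μ.real (A i)) := by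
  have hA : ∀ i ∈ W, μ.real (A i) ≠ 0 := fun i hi =>
    (h.trans_le (measureReal_mono (Set.biInter_subset_of_mem hi))).ne'
  simp only [tau, ← measureReal_def]
  rw [Real.log_div h.ne' (prod_ne_zero_iff.2 hA), Real.log_prod hA]

theorem sum_PMI_eq (h : 0 < μ.real (jointEvent A W ∩ B)) :
    ∑ i ∈ W, PMI μ (A i) B = PMI μ (jointEvent A W) B - sigma μ A W B + tau μ A W := by
  have hB : 0 < μ.real (B ∩ jointEvent A W) := Set.inter_comm _ B ▸ h
  have hsum : ∑ i ∈ W, PMI μ (A i) B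
      = ∑ i ∈ W, Real.log (condP μ B (A i)) - ∑ i ∈ W, Real.log (μ.real (A i)) := by
    rw [← sum_sub_distrib]
    refine sum_congr rfl fun i hi => ?_
    rw [PMI_comm, PMI_eq_log_condP_sub_log (measureReal_inter_pos_of_jointEvent hB hi)]
  rw [hsum, PMI_comm, PMI_eq_log_condP_sub_log hB, sigma_eq_log_sub_sum hB,
    tau_eq_log_sub_sum (measureReal_pos_of_inter_left h)]
  ring

theorem sum_PMI_sub_sum_PMI (hW : 0 < μ.real (jointEvent A W ∩ B))
    (hWstar : 0 < μ.real (jointEvent A Wstar ∩ B)) :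
    ∑ i ∈ Wstar, PMI μ (A i) B - ∑ i ∈ W, PMI μ (A i) B
      = rho μ (jointEvent A W) (jointEvent A Wstar) B + sigma μ A W B - sigma μ A Wstar B
        - (tau μ A W - tau μ A Wstar) := by
  rw [sum_PMI_eq hW, sum_PMI_eq hWstar, rho_eq_PMI_sub_PMI hW hWstar]
  ring

end JointEvent

theorem gram_inv_mul_mulVec_transpose_mulVec {R m n : Type*} [CommRing R] [Fintype m]
    [DecidableEq m] [Fintype n] {C : Matrix m n R} (hC : IsUnit (C * Cᵀ)) (v : m → R) :
    ((C * Cᵀ)⁻¹ * C) *ᵥ (Cᵀ *ᵥ v) = v := by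
  rw [mulVec_mulVec, Matrix.mul_assoc, nonsing_inv_mul _ ((isUnit_iff_isUnit_det _).1 hC),
    one_mulVec]

theorem analogy_embedding_canonical_general [MeasurableSpace Ω] (μ : Measure Ω)
    [IsFiniteMeasure μ] {ι κ δ : Type*} [Fintype κ] [Fintype δ] [DecidableEq δ]
    (A : ι → Set Ω) (B : κ → Set Ω) (W Wstar : Finset ι)
    (hWB : ∀ j, 0 < μ.real (jointEvent A W ∩ B j))
    (hWstarB : ∀ j, 0 < μ.real (jointEvent A Wstar ∩ B j))
    (C : Matrix δ κ ℝ) (hC : IsUnit (C * Cᵀ)) (w : ι → δ → ℝ)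
    (hwW : ∀ i ∈ W, Cᵀ *ᵥ w i = fun j => PMI μ (A i) (B j))
    (hwWstar : ∀ i ∈ Wstar, Cᵀ *ᵥ w i = fun j => PMI μ (A i) (B j)) :
    ∑ i ∈ Wstar, w i = ∑ i ∈ W, w i + ((C * Cᵀ)⁻¹ * C) *ᵥ
      (fun j => rho μ (jointEvent A W) (jointEvent A Wstar) (B j) + sigma μ A W (B j)
        - sigma μ A Wstar (B j) - (tau μ A W - tau μ A Wstar)) := by
  have herror : (fun j => rho μ (jointEvent A W) (jointEvent A Wstar) (B j) + sigma μ A W (B j)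
      - sigma μ A Wstar (B j) - (tau μ A W - tau μ A Wstar))
      = Cᵀ *ᵥ (∑ i ∈ Wstar, w i - ∑ i ∈ W, w i) := by
    rw [mulVec_sub, mulVec_sum, mulVec_sum, sum_congr rfl hwWstar, sum_congr rfl hwW]
    funext j
    simp only [Pi.sub_apply, Finset.sum_apply, sum_PMI_sub_sum_PMI (hWB j) (hWstarB j)]
  rw [herror, gram_inv_mul_mulVec_transpose_mulVec hC, add_sub_cancel]

/-- **Corollary 9.** The analogy identity with the canonical transformation parameters
`W⁺ = {w_{a*}}`, `W⁻ = {w_a}`, i.e. `W = {w_b, w_{a*}}` and `W_* = {w_{b*}, w_a}`: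
`w⃗_{b*} = w⃗_{a*} − w⃗_a + w⃗_b + C†(ρ^{W,W_*} + σ^W − σ^{W_*} − (τ^W − τ^{W_*})·𝟙)`. -/
theorem analogy_embedding_canonical
    [MeasurableSpace Ω] (μ : Measure Ω) [IsProbabilityMeasure μ]
    {ι : Type*} [DecidableEq ι] (A : ι → Set Ω) {n : ℕ} (B : Fin n → Set Ω)
    (a astar b bstar : ι)
    (hbas : b ≠ astar) (hbsa : bstar ≠ a)
    (hmA : ∀ i, MeasurableSet (A i)) (hmB : ∀ j, MeasurableSet (B j))
    (hA : ∀ i ∈ ({b, astar, bstar, a} : Finset ι), 0 < (μ (A i)).toReal)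
    (hB : ∀ j, 0 < (μ (B j)).toReal)
    (hAW : 0 < (μ (jointEvent A {b, astar})).toReal)
    (hAWs : 0 < (μ (jointEvent A {bstar, a})).toReal)
    (hAB : ∀ i ∈ ({b, astar, bstar, a} : Finset ι), ∀ j, 0 < (μ (A i ∩ B j)).toReal)
    (hAWB : ∀ j, 0 < (μ (jointEvent A {b, astar} ∩ B j)).toReal)
    (hAWsB : ∀ j, 0 < (μ (jointEvent A {bstar, a} ∩ B j)).toReal)
    {d : ℕ} (C : Matrix (Fin d) (Fin n) ℝ)
    (hC : IsUnit (C * C.transpose))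
    (wv : ι → Fin d → ℝ)
    (hwa : C.transpose.mulVec (wv a) = fun j => PMI μ (A a) (B j))
    (hwas : C.transpose.mulVec (wv astar) = fun j => PMI μ (A astar) (B j))
    (hwb : C.transpose.mulVec (wv b) = fun j => PMI μ (A b) (B j))
    (hwbs : C.transpose.mulVec (wv bstar) = fun j => PMI μ (A bstar) (B j)) :
    wv bstar = wv astar - wv a + wv b
      + ((C * C.transpose)⁻¹ * C).mulVec
          (fun j => rho μ (jointEvent A {b, astar}) (jointEvent A {bstar, a}) (B j)
            + sigma μ A {b, astar} (B j) - sigma μ A {bstar, a} (B j)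
            - (tau μ A {b, astar} - tau μ A {bstar, a})) := by
  have h := analogy_embedding_canonical_general μ A B {b, astar} {bstar, a} hAWB hAWsB C hC wv
    (by simp [hwb, hwas]) (by simp [hwbs, hwa])
  rw [sum_pair hbas, sum_pair hbsa] at h
  rw [eq_sub_of_add_eq h]
  abel

end AnalogiesExplained
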